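/- arXiv:math/0304410 — 2 statements merged into one kernel-verified Lean document; each statement's English description precedes it below -/
import Mathlib

section
/- There exists a 73×73 matrix with all entries equal to 1 or -1 whose determinant equals 2^72 · 18^35 · 163. Consequently md(73) ≥ 2^72 · 18^35 · 163. -/
/-- `md n` is the maximal determinant of an `n × n` matrix all of whose
entries are `1` or `-1`. -/
noncomputable def md (n : ℕ) : ℤ :=
  sSup {d : ℤ | ∃ M : Matrix (Fin n) (Fin n) ℤ,
    (∀ i j, M i j = 1 ∨ M i j = -1) ∧ M.det = d}

/-! Bordering a Hadamard matrix `H` of order `n` by a column `x` and a row `-y` of signs, with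
corner entry `1`, gives a sign matrix of determinant `det H * (n + x ⬝ᵥ H *ᵥ y) / n`. For fixed `y`
the best `x` consists of the signs of `H *ᵥ y`, so that `x ⬝ᵥ H *ᵥ y` becomes the `ℓ¹` norm of
`H *ᵥ y`. The Paley matrix of the field with `71` elements has order `72`, hence determinant
`±72 ^ 36`, and an explicit `y` attains the `ℓ¹` norm `580`: the determinant of the bordered matrix
is then `±72 ^ 35 * (72 + 580) = ±2 ^ 72 * 18 ^ 35 * 163`. -/

open Matrix

section SignMatrix

variable {m n R : Type*}

/-- A sign matrix (±1 matrix): every entry is `1` or `-1`. -/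
def IsSignMatrix (M : Matrix m n ℤ) : Prop :=
  ∀ i j, M i j = 1 ∨ M i j = -1

theorem finite_setOf_isSignMatrix [Finite m] [Finite n] :
    {M : Matrix m n ℤ | IsSignMatrix M}.Finite :=
  Set.Finite.pi' fun _ => Set.Finite.pi' fun _ => Set.toFinite {1, -1}

theorem IsSignMatrix.det_le_md {k : ℕ} {M : Matrix (Fin k) (Fin k) ℤ} (hM : IsSignMatrix M) :
    M.det ≤ md k :=
  le_csSup (finite_setOf_isSignMatrix.image det).bddAbove ⟨M, hM, rfl⟩

theorem IsSignMatrix.updateRow_neg [DecidableEq m] {M : Matrix m n ℤ} (hM : IsSignMatrix M)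
    (i : m) : IsSignMatrix (M.updateRow i (-M i)) := by
  intro a b
  obtain rfl | ha := eq_or_ne a i
  · simpa [neg_eq_iff_eq_neg, or_comm] using hM a b
  · simpa [ha] using hM a b

theorem IsSignMatrix.exists_det_eq_abs [Fintype m] [DecidableEq m] [Nonempty m]
    {M : Matrix m m ℤ} (hM : IsSignMatrix M) :
    ∃ N : Matrix m m ℤ, IsSignMatrix N ∧ N.det = |M.det| := by
  obtain hdet | hdet := abs_choice M.det
  · exact ⟨M, hM, hdet.symm⟩
  · obtain ⟨i⟩ := ‹Nonempty m›
    refine ⟨M.updateRow i (-M i), hM.updateRow_neg i, ?_⟩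
    rw [hdet, ← neg_one_smul ℤ (M i), det_updateRow_smul, updateRow_eq_self, neg_one_mul]

theorem IsSignMatrix.exists_fin_det_eq_abs [Fintype m] [DecidableEq m] [Nonempty m]
    {M : Matrix m m ℤ} (hM : IsSignMatrix M) {k : ℕ} (hk : Fintype.card m = k) :
    ∃ N : Matrix (Fin k) (Fin k) ℤ, IsSignMatrix N ∧ N.det = |M.det| := by
  obtain ⟨N, hN, hdet⟩ := hM.exists_det_eq_abs
  let e := Fintype.equivFinOfCardEq hk
  exact ⟨reindex e e N, fun i j => hN _ _, (det_reindex_self e N).trans hdet⟩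

/-- The matrix `A` bordered by the column `x`, the row `-y` and the corner entry `1`. -/
def bordered [Zero R] [One R] [Neg R] (A : Matrix m n R) (x : m → R) (y : n → R) :
    Matrix (m ⊕ Unit) (n ⊕ Unit) R :=
  fromBlocks A (replicateCol Unit x) (-replicateRow Unit y) 1

theorem IsSignMatrix.bordered {A : Matrix m n ℤ} (hA : IsSignMatrix A) {x : m → ℤ}
    (hx : ∀ i, x i = 1 ∨ x i = -1) {y : n → ℤ} (hy : ∀ j, y j = 1 ∨ y j = -1) :
    IsSignMatrix (bordered A x y) := by
  rintro (i | _) (j | _)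
  · exact hA i j
  · exact hx i
  · simpa [_root_.bordered, neg_eq_iff_eq_neg, or_comm] using hy j
  · exact Or.inl rfl

theorem bordered_mul_transpose [Fintype n] [CommRing R] (A : Matrix m n R) (x : m → R) (y : n → R) :
    bordered A x y * (bordered A x y)ᵀ =
      fromBlocks (A * Aᵀ + vecMulVec x x) (replicateCol Unit (x - A *ᵥ y))
        (replicateRow Unit (x - A *ᵥ y)) ((1 + y ⬝ᵥ y) • 1) := by
  have hcorner : -replicateRow Unit y * -replicateCol Unit y = (y ⬝ᵥ y) • 1 := by
    ext
    simp [replicateRow_mul_replicateCol_apply]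
  rw [bordered, fromBlocks_transpose, fromBlocks_multiply, transpose_neg, transpose_replicateCol,
    transpose_replicateRow, transpose_one, ← vecMulVec_eq, Matrix.mul_neg, Matrix.neg_mul,
    hcorner, Matrix.mul_one, Matrix.one_mul, Matrix.mul_one, ← replicateCol_mulVec,
    ← replicateRow_vecMul, vecMul_transpose, add_smul, one_smul, neg_add_eq_sub, neg_add_eq_sub,
    add_comm (1 : Matrix Unit Unit R)]
  rfl

theorem isSignMatrix_of_isHadamard [Fintype m] [DecidableEq m] {H : Matrix m m ℤ}
    (hH : H.IsHadamard) : IsSignMatrix H := fun i j =>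
  Unitary.mem_iff_eq_one_or_eq_neg_one.mp (hH.apply_mem i j)

theorem isHadamard_of_isSignMatrix [Fintype m] [DecidableEq m] [Nonempty m] {H : Matrix m m ℤ}
    (hH : IsSignMatrix H) (hmul : H * Hᵀ = (Fintype.card m : ℤ) • 1) : H.IsHadamard :=
  IsHadamard.of_mul_conjTranspose
    (fun i j => Unitary.mem_iff_eq_one_or_eq_neg_one.mpr (hH i j))
    (by rwa [conjTranspose_eq_transpose_of_trivial])
    (IsRegular.of_ne_zero (Nat.cast_ne_zero.mpr Fintype.card_ne_zero))

theorem exists_sign_dotProduct_eq_sum_abs [Fintype m] [Ring R] [LinearOrder R]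
    [IsStrictOrderedRing R] (v : m → R) :
    ∃ x : m → R, (∀ i, x i = 1 ∨ x i = -1) ∧ x ⬝ᵥ v = ∑ i, |v i| := by
  have hsign (a : R) : ∃ s : R, (s = 1 ∨ s = -1) ∧ s * a = |a| := by
    obtain ha | ha := abs_choice a
    · exact ⟨1, Or.inl rfl, by rw [one_mul, ha]⟩
    · exact ⟨-1, Or.inr rfl, by rw [neg_one_mul, ha]⟩
  choose s hs hsa using hsign
  exact ⟨fun i => s (v i), fun i => hs (v i), Finset.sum_congr rfl fun i _ => hsa (v i)⟩

section Determinant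

variable [Fintype m] [DecidableEq m]

theorem det_fromBlocks_mul_pow_of_isHadamard [Fintype n] [DecidableEq n] [CommRing R] [StarRing R]
    {H : Matrix m m R} (hH : H.IsHadamard) (hcard : IsRegular (Fintype.card m : R))
    (B : Matrix m n R) (C : Matrix n m R) (D : Matrix n n R) :
    (fromBlocks H B C D).det * (Fintype.card m : R) ^ Fintype.card n =
      H.det * ((Fintype.card m : R) • D - C * Hᴴ * B).det := by
  set c : R := (Fintype.card m : R)
  have hmul : fromBlocks H B C D * fromBlocks Hᴴ (-(Hᴴ * B)) 0 (c • 1) =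
      fromBlocks (H * Hᴴ) 0 (C * Hᴴ) (c • D - C * Hᴴ * B) := by
    simp [fromBlocks_multiply, ← Matrix.mul_assoc, hH.mul_conjTranspose, c, sub_eq_neg_add]
  have hdet := congrArg det hmul
  rw [det_mul, det_fromBlocks_zero₂₁, det_fromBlocks_zero₁₂, det_smul, det_one, det_mul] at hdet
  apply (hH.conjTranspose.isRegular_det hcard).left
  linear_combination hdet

theorem det_bordered_mul_card_of_isHadamard [CommRing R] [StarRing R] {H : Matrix m m R}
    (hH : H.IsHadamard) (hcard : IsRegular (Fintype.card m : R)) (x y : m → R) :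
    (bordered H x y).det * (Fintype.card m : R) =
      H.det * ((Fintype.card m : R) + y ⬝ᵥ Hᴴ *ᵥ x) := by
  have hdet := det_fromBlocks_mul_pow_of_isHadamard hH hcard (replicateCol Unit x)
    (-replicateRow Unit y) 1
  have hcorner : ((Fintype.card m : R) • 1 - -replicateRow Unit y * Hᴴ * replicateCol Unit x).det =
      Fintype.card m + y ⬝ᵥ Hᴴ *ᵥ x := by
    rw [det_unique, Matrix.mul_assoc, ← replicateCol_mulVec, Matrix.neg_mul, sub_neg_eq_add,
      Matrix.add_apply, Matrix.smul_apply, one_apply_eq, smul_eq_mul, mul_one,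
      replicateRow_mul_replicateCol_apply]
  rwa [hcorner, Fintype.card_unit, pow_one] at hdet

theorem abs_det_of_isHadamard [CommRing R] [LinearOrder R] [IsStrictOrderedRing R] [StarRing R]
    [TrivialStar R] {H : Matrix m m R} (hH : H.IsHadamard) {k : ℕ}
    (hk : Fintype.card m = 2 * k) : |H.det| = (Fintype.card m : R) ^ k := by
  have hsq : H.det ^ 2 = ((Fintype.card m : R) ^ k) ^ 2 := by
    have hstar := hH.det_mul_star_det
    rwa [star_trivial, ← sq, hk, mul_comm 2 k, pow_mul, ← hk.trans (mul_comm 2 k)] at hstar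
  rwa [← sq_abs, sq_eq_sq₀ (abs_nonneg _) (by positivity)] at hsq

theorem exists_isSignMatrix_abs_det_eq_of_isHadamard {H : Matrix m m ℤ} (hH : H.IsHadamard)
    {y : m → ℤ} (hy : ∀ i, y i = 1 ∨ y i = -1) {k : ℕ} (hk : Fintype.card m = 2 * (k + 1)) :
    ∃ M : Matrix (m ⊕ Unit) (m ⊕ Unit) ℤ, IsSignMatrix M ∧
      |M.det| = Fintype.card m ^ k * (Fintype.card m + ∑ i, |(H *ᵥ y) i|) := by
  obtain ⟨x, hx, hxy⟩ := exists_sign_dotProduct_eq_sum_abs (H *ᵥ y)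
  have hcard : (Fintype.card m : ℤ) ≠ 0 := by
    rw [hk]
    positivity
  have hdet : (bordered H x y).det * Fintype.card m =
      H.det * (Fintype.card m + ∑ i, |(H *ᵥ y) i|) := by
    rw [det_bordered_mul_card_of_isHadamard hH (IsRegular.of_ne_zero hcard),
      conjTranspose_eq_transpose_of_trivial, mulVec_transpose, dotProduct_comm,
      ← dotProduct_mulVec, hxy]
  refine ⟨bordered H x y, (isSignMatrix_of_isHadamard hH).bordered hx hy,
    mul_right_cancel₀ hcard ?_⟩
  calc
    |(bordered H x y).det| * Fintype.card m
      = |H.det * (Fintype.card m + ∑ i, |(H *ᵥ y) i|)| := by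
        rw [← hdet, abs_mul, Nat.abs_cast]
    _ = Fintype.card m ^ (k + 1) * (Fintype.card m + ∑ i, |(H *ᵥ y) i|) := by
        rw [abs_mul, abs_det_of_isHadamard hH hk,
          abs_of_nonneg (a := _ + ∑ i, |(H *ᵥ y) i|) (by positivity)]
    _ = Fintype.card m ^ k * (Fintype.card m + ∑ i, |(H *ᵥ y) i|) * Fintype.card m := by ring

end Determinant

end SignMatrix

section Paley

theorem ringChar_ne_two_of_card_mod_four {F : Type*} [Field F] [Fintype F]
    (hF : Fintype.card F % 4 = 3) : ringChar F ≠ 2 := by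
  rw [Ne, FiniteField.even_card_iff_char_two]
  lia

variable (F : Type*) [Field F] [Fintype F] [DecidableEq F]

/-- The Jacobsthal matrix of a finite field, with entry `χ (a - b)` in row `a` and column `b`, where
`χ` is the quadratic character. -/
def jacobsthalMatrix : Matrix F F ℤ :=
  circulant (quadraticChar F)

/-- The Paley matrix of type I. Rows and columns are indexed by the projective line over `F`, the
summand `Unit` being the point at infinity. -/
def paleyMatrix : Matrix (F ⊕ Unit) (F ⊕ Unit) ℤ :=
  bordered (1 + jacobsthalMatrix F) 1 1

variable {F}

theorem sum_quadraticChar_mul_quadraticChar_add (hF : ringChar F ≠ 2) {c : F} (hc : c ≠ 0) :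
    ∑ a, quadraticChar F a * quadraticChar F (a + c) = -1 := by
  have hJacobi : jacobiSum (quadraticChar F) (quadraticChar F) = -quadraticChar F (-1) := by
    simpa only [(quadraticChar_isQuadratic F).inv] using
      jacobiSum_nontrivial_inv (quadraticChar_ne_one hF)
  calc
    ∑ a, quadraticChar F a * quadraticChar F (a + c)
      = ∑ t, quadraticChar F (-c * t) * quadraticChar F (-c * t + c) :=
        (Equiv.sum_comp (Equiv.mulLeft₀ (-c) (neg_ne_zero.mpr hc)) _).symm
    _ = ∑ t, quadraticChar F (-1) * (quadraticChar F t * quadraticChar F (1 - t)) := by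
        refine Finset.sum_congr rfl fun t _ => ?_
        have hfactor : -c * t + c = c * (1 - t) := by ring
        rw [hfactor, neg_mul, ← neg_one_mul, map_mul, map_mul, map_mul]
        linear_combination (quadraticChar F (-1) * quadraticChar F t * quadraticChar F (1 - t)) *
          quadraticChar_sq_one hc
    _ = quadraticChar F (-1) * jacobiSum (quadraticChar F) (quadraticChar F) := by
        rw [← Finset.mul_sum, jacobiSum]
    _ = -1 := by
        rw [hJacobi]
        linear_combination -quadraticChar_sq_one (neg_ne_zero.mpr (one_ne_zero (α := F)))

theorem sum_quadraticChar_sq : ∑ a, quadraticChar F a ^ 2 = (Fintype.card F : ℤ) - 1 := by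
  have hsq (a : F) : quadraticChar F a ^ 2 = 1 - if a = 0 then 1 else 0 := by
    split_ifs with ha
    · rw [ha, MulChar.map_zero, zero_pow two_ne_zero, sub_self]
    · rw [quadraticChar_sq_one ha, sub_zero]
  simp only [hsq, Finset.sum_sub_distrib, Finset.sum_ite_eq', Finset.mem_univ, if_true,
    Finset.sum_const, Finset.card_univ, nsmul_one]

theorem jacobsthalMatrix_mulVec_one (hF : ringChar F ≠ 2) : jacobsthalMatrix F *ᵥ 1 = 0 := by
  ext a
  calc
    (jacobsthalMatrix F *ᵥ 1) a = ∑ b, quadraticChar F (a - b) := dotProduct_one _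
    _ = ∑ t, quadraticChar F t := (Equiv.subLeft a).sum_comp (quadraticChar F)
    _ = 0 := quadraticChar_sum_zero hF

theorem jacobsthalMatrix_mul_transpose (hF : ringChar F ≠ 2) :
    jacobsthalMatrix F * (jacobsthalMatrix F)ᵀ = (Fintype.card F : ℤ) • 1 - vecMulVec 1 1 := by
  ext a b
  have hentry : (jacobsthalMatrix F * (jacobsthalMatrix F)ᵀ) a b =
      ∑ t, quadraticChar F t * quadraticChar F (t + (b - a)) := by
    rw [← (Equiv.subLeft a).sum_comp]
    refine Finset.sum_congr rfl fun k _ => ?_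
    rw [Equiv.subLeft_apply, sub_add_sub_cancel']
    rfl
  obtain rfl | hab := eq_or_ne a b
  · simp only [hentry, sub_self, add_zero, ← pow_two (quadraticChar F _), sum_quadraticChar_sq,
      Matrix.sub_apply, Matrix.smul_apply, one_apply_eq, vecMulVec_apply, Pi.one_apply,
      smul_eq_mul, mul_one]
  · simp only [hentry, sum_quadraticChar_mul_quadraticChar_add hF (sub_ne_zero.mpr hab.symm),
      Matrix.sub_apply, Matrix.smul_apply, one_apply_ne hab, vecMulVec_apply, Pi.one_apply,
      smul_zero, mul_one, zero_sub]

theorem jacobsthalMatrix_transpose (hF : Fintype.card F % 4 = 3) :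
    (jacobsthalMatrix F)ᵀ = -jacobsthalMatrix F := by
  have hneg : quadraticChar F (-1) = -1 := by
    rw [quadraticChar_neg_one (ringChar_ne_two_of_card_mod_four hF),
      ZMod.χ₄_nat_three_mod_four hF]
  ext a b
  rw [transpose_apply, neg_apply, jacobsthalMatrix, circulant_apply, circulant_apply,
    ← neg_sub a b, ← neg_one_mul, map_mul, hneg, neg_one_mul]

theorem isSignMatrix_one_add_jacobsthalMatrix : IsSignMatrix (1 + jacobsthalMatrix F) := by
  intro a b
  obtain rfl | hab := eq_or_ne a b
  · simp [jacobsthalMatrix, circulant_apply]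
  · simpa [jacobsthalMatrix, circulant_apply, hab] using
      quadraticChar_dichotomy (sub_ne_zero.mpr hab)

theorem paleyMatrix_mul_transpose (hF : Fintype.card F % 4 = 3) :
    paleyMatrix F * (paleyMatrix F)ᵀ = (Fintype.card (F ⊕ Unit) : ℤ) • 1 := by
  have hdiag : (1 + jacobsthalMatrix F) * (1 + jacobsthalMatrix F)ᵀ + vecMulVec 1 1 =
      (1 + Fintype.card F : ℤ) • 1 := by
    rw [transpose_add, transpose_one, Matrix.add_mul, Matrix.mul_add, Matrix.mul_add,
      jacobsthalMatrix_mul_transpose (ringChar_ne_two_of_card_mod_four hF),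
      jacobsthalMatrix_transpose hF, add_smul, one_smul, Matrix.one_mul, Matrix.one_mul,
      Matrix.mul_one]
    abel
  have hborder : (1 : F → ℤ) - (1 + jacobsthalMatrix F) *ᵥ 1 = 0 := by
    rw [add_mulVec, one_mulVec,
      jacobsthalMatrix_mulVec_one (ringChar_ne_two_of_card_mod_four hF), add_zero, sub_self]
  have hcard : (Fintype.card (F ⊕ Unit) : ℤ) = 1 + Fintype.card F := by
    rw [Fintype.card_sum, Fintype.card_unit, Nat.cast_add, Nat.cast_one, add_comm]
  rw [paleyMatrix, bordered_mul_transpose, hdiag, hborder, one_dotProduct_one, hcard,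
    replicateCol_zero, replicateRow_zero, ← fromBlocks_one, fromBlocks_smul, smul_zero, smul_zero]

theorem isHadamard_paleyMatrix (hF : Fintype.card F % 4 = 3) : (paleyMatrix F).IsHadamard :=
  isHadamard_of_isSignMatrix
    (isSignMatrix_one_add_jacobsthalMatrix.bordered (fun _ => Or.inl rfl) fun _ => Or.inl rfl)
    (paleyMatrix_mul_transpose hF)

end Paley

-- Euler's criterion in a form that evaluates quickly; adding `1` before the reduction modulo `p`
-- turns the residues of `-1, 0, 1` into the natural numbers `0, 1, 2`.
theorem quadraticChar_zmod_eq_val_pow_mod {p : ℕ} [Fact p.Prime] (hp : p ≠ 2) (a : ZMod p) :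
    quadraticChar (ZMod p) a = ((a.val ^ (p / 2) + 1) % p : ℕ) - 1 := by
  have hmod : (quadraticChar (ZMod p) a + 1) % p = (a.val ^ (p / 2) + 1 : ℤ) % p := by
    rw [← ZMod.intCast_eq_intCast_iff']
    push_cast
    rw [quadraticChar_eq_pow_of_char_ne_two' (by rwa [ZMod.ringChar_zmod_n]), ZMod.card,
      ZMod.natCast_zmod_val]
  have hp_gt : 2 < p := lt_of_le_of_ne (Fact.out : p.Prime).two_le hp.symm
  have hlt : 0 ≤ quadraticChar (ZMod p) a + 1 ∧ quadraticChar (ZMod p) a + 1 < p := by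
    rcases quadraticChar_isQuadratic (ZMod p) a with h | h | h <;> rw [h] <;> lia
  rw [Int.emod_eq_of_lt hlt.1 hlt.2] at hmod
  push_cast
  rw [← hmod, add_sub_cancel_right]

instance fact_prime_seventy_one : Fact (Nat.Prime 71) := ⟨by norm_num⟩

/-- A sign vector for the Paley matrix of order `72`, found by a computer search for a large `ℓ¹`
norm of its image. -/
def paleyWitness : ZMod 71 ⊕ Unit → ℤ :=
  Sum.elim (fun a => if a ∈ ({0, 1, 2, 3, 4, 5, 6, 7, 8, 11, 12, 13, 15, 26, 28, 30, 35, 40, 44, 45,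
    47, 49, 52, 53, 58, 60, 62, 64} : Finset (ZMod 71)) then -1 else 1) 1

theorem paleyWitness_eq_one_or_neg_one (i : ZMod 71 ⊕ Unit) :
    paleyWitness i = 1 ∨ paleyWitness i = -1 := by
  rcases i with a | _
  · exact (ite_eq_or_eq _ _ _).symm
  · exact Or.inl rfl

theorem sum_abs_paleyMatrix_mulVec_paleyWitness :
    ∑ i, |(paleyMatrix (ZMod 71) *ᵥ paleyWitness) i| = 580 := by
  have hchar : (quadraticChar (ZMod 71) : ZMod 71 → ℤ) =
      fun a => (((a.val ^ (71 / 2) + 1) % 71 : ℕ) : ℤ) - 1 :=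
    funext fun a => quadraticChar_zmod_eq_val_pow_mod (by lia) a
  rw [paleyMatrix, jacobsthalMatrix, hchar]
  decide +kernel

theorem stmt_14 :
    (∃ M : Matrix (Fin 73) (Fin 73) ℤ,
      (∀ i j, M i j = 1 ∨ M i j = -1) ∧ M.det = 2^72 * 18^35 * 163) ∧
    (2^72 * 18^35 * 163 : ℤ) ≤ md 73 := by
  have hcard : Fintype.card (ZMod 71 ⊕ Unit) = 72 := by
    rw [Fintype.card_sum, ZMod.card, Fintype.card_unit]
  have hH : (paleyMatrix (ZMod 71)).IsHadamard := isHadamard_paleyMatrix (by rw [ZMod.card])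
  obtain ⟨M, hM, hdet⟩ := exists_isSignMatrix_abs_det_eq_of_isHadamard hH
    paleyWitness_eq_one_or_neg_one (k := 35) hcard
  obtain ⟨N, hN, hNdet⟩ := hM.exists_fin_det_eq_abs (k := 73)
    (by rw [Fintype.card_sum, hcard, Fintype.card_unit])
  have hNdet_eq : N.det = 2 ^ 72 * 18 ^ 35 * 163 := by
    rw [hNdet, hdet, hcard, sum_abs_paleyMatrix_mulVec_paleyWitness]
    norm_num
  exact ⟨⟨N, hN, hNdet_eq⟩, hNdet_eq ▸ hN.det_le_md⟩
end

section
/- There exists a 79×79 matrix with all entries equal to 1 or -1 whose determinant equals 2^78 · 4 · 19^30 · 23^9. Consequently md(79) ≥ 2^78 · 4 · 19^30 · 23^9. -/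
/-!
Border a `4 × 4` array `R` of circulants of order `m` by three columns `U`, constant on blocks,
taken from a Hadamard matrix of order `4`. If every circulant has row sums `1`, then `R U = 0` and
`Uᵀ U = 4m`, so the determinant of `[R U; Uᵀ D]` does not depend on `D`. For `D = 0` its square
is the determinant of the Gram matrix, which is block diagonal; the correlations of the sixteen
circulants are chosen so that `R Rᵀ + U Uᵀ` is a perturbation of rank one of `1 ⊗ (4m + 4J)`.
For `m = 19` suitable circulants come from unions of cyclotomic classes of order `2` and `6`.
-/

namespace MaxDet

open Matrix
open scoped Kronecker

section Determinants

variable {R m n : Type*} [CommRing R] [Fintype m] [DecidableEq m] [Fintype n] [DecidableEq n]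

lemma det_smul_one_add_vecMulVec [Nonempty n] (d : R) (u v : n → R) :
    (d • 1 + vecMulVec u v).det = d ^ (Fintype.card n - 1) * (d + u ⬝ᵥ v) := by
  obtain ⟨k, hk⟩ := Nat.exists_eq_add_one.mpr (Fintype.card_pos (α := n))
  have heval := eval_charpoly (vecMulVec (-u) v) d
  rw [charpoly_vecMulVec, neg_vecMulVec, sub_neg_eq_add, scalar_apply,
    ← smul_one_eq_diagonal] at heval
  rw [← heval, hk]
  simp only [neg_dotProduct, neg_smul, sub_neg_eq_add, Polynomial.eval_add, Polynomial.eval_smul,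
    Polynomial.eval_pow, Polynomial.eval_X, smul_eq_mul, add_tsub_cancel_right]
  ring

lemma mul_det_add_vecMulVec_of_mulVec_eq_smul {A : Matrix n n R} {d : R} {u : n → R}
    (hAu : A *ᵥ u = d • u) (hd : IsLeftRegular d) (v : n → R) :
    d * (A + vecMulVec u v).det = A.det * (d + u ⬝ᵥ v) := by
  cases isEmpty_or_nonempty n
  · simp
  have hfactor : A * (d • 1 + vecMulVec u v) = d • (A + vecMulVec u v) := by
    rw [Matrix.mul_add, Matrix.mul_smul, Matrix.mul_one, mul_vecMulVec, hAu, smul_vecMulVec,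
      smul_add]
  have hdet := congrArg det hfactor
  rw [det_mul, det_smul_one_add_vecMulVec, det_smul] at hdet
  apply hd.pow (Fintype.card n - 1)
  dsimp only
  rw [← mul_assoc, ← pow_succ, Nat.sub_add_cancel Fintype.card_pos, ← hdet]
  ring

lemma det_one_kronecker_add_vecMulVec [Nonempty m] [Nonempty n] {a b : R} (c : R)
    (hd : IsLeftRegular (a + Fintype.card n * b)) :
    ((1 : Matrix m m R) ⊗ₖ (a • (1 : Matrix n n R) + vecMulVec 1 (b • 1)) +
      vecMulVec 1 (c • 1)).det =
    a ^ ((Fintype.card n - 1) * Fintype.card m) *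
      (a + Fintype.card n * b) ^ (Fintype.card m - 1) *
      (a + Fintype.card n * b + Fintype.card m * Fintype.card n * c) := by
  have hones : ((1 : Matrix m m R) ⊗ₖ (a • (1 : Matrix n n R) + vecMulVec 1 (b • 1))) *ᵥ 1 =
      (a + Fintype.card n * b) • 1 := by
    ext ⟨s, i⟩
    simp [mulVec, dotProduct, Fintype.sum_prod_type, one_apply, Finset.sum_add_distrib]
  apply hd
  dsimp only
  rw [mul_det_add_vecMulVec_of_mulVec_eq_smul hones hd, det_kronecker, det_one, one_pow, one_mul,
    det_smul_one_add_vecMulVec, mul_pow, ← pow_mul]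
  simp only [dotProduct_smul, one_dotProduct_one, Fintype.card_prod, Nat.cast_mul, smul_eq_mul]
  obtain ⟨k, hk⟩ := Nat.exists_eq_add_one.mpr (Fintype.card_pos (α := m))
  rw [hk, add_tsub_cancel_right, pow_succ]
  ring

lemma det_fromBlocks_eq_of_mul_eq_zero {A : Matrix m m R} {B : Matrix m n R} {C : Matrix n m R}
    {c : R} (hAB : A * B = 0) (hCB : C * B = c • 1) (hc : IsLeftRegular c) (D : Matrix n n R) :
    (fromBlocks A B C D).det = (fromBlocks A B C 0).det := by
  have hclear : fromBlocks A B C D * fromBlocks (c • 1) (-(B * D)) 0 (c • 1) =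
      c • fromBlocks A B C 0 := by
    simp [fromBlocks_multiply, fromBlocks_smul, ← Matrix.mul_assoc, hAB, hCB]
  have hdet := congrArg det hclear
  rw [det_mul, det_fromBlocks_zero₂₁, det_smul, det_smul, det_one, det_one, mul_one, mul_one,
    ← pow_add, ← Fintype.card_sum, det_smul, mul_comm] at hdet
  exact hc.pow _ hdet

lemma sq_det_fromBlocks_transpose {A : Matrix m m R} {B : Matrix m n R} {c : R}
    (hAB : A * B = 0) (hBB : Bᵀ * B = c • 1) (hc : IsLeftRegular c) (D : Matrix n n R) :
    (fromBlocks A B Bᵀ D).det ^ 2 = (A * Aᵀ + B * Bᵀ).det * c ^ Fintype.card n := by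
  have hBA : Bᵀ * Aᵀ = 0 := by rw [← transpose_mul, hAB, transpose_zero]
  have hgram : fromBlocks A B Bᵀ 0 * (fromBlocks A B Bᵀ 0)ᵀ =
      fromBlocks (A * Aᵀ + B * Bᵀ) 0 0 (c • 1) := by
    simp [fromBlocks_transpose, fromBlocks_multiply, hAB, hBA, hBB]
  rw [det_fromBlocks_eq_of_mul_eq_zero hAB hBB hc, sq]
  nth_rw 2 [← det_transpose]
  rw [← det_mul, hgram, det_fromBlocks_zero₂₁, det_smul, det_one, mul_one]

end Determinants

/-- A matrix with all entries `1` or `-1`. -/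
def IsSignMatrix {m n : Type*} (M : Matrix m n ℤ) : Prop :=
  ∀ i j, M i j = 1 ∨ M i j = -1

namespace IsSignMatrix

variable {l m n o : Type*}

lemma neg {M : Matrix m n ℤ} (hM : IsSignMatrix M) : IsSignMatrix (-M) := fun i j => by
  simpa only [Matrix.neg_apply, neg_inj, neg_eq_iff_eq_neg, neg_neg] using (hM i j).symm

lemma fromBlocks {A : Matrix m n ℤ} {B : Matrix m o ℤ} {C : Matrix l n ℤ} {D : Matrix l o ℤ}
    (hA : IsSignMatrix A) (hB : IsSignMatrix B) (hC : IsSignMatrix C) (hD : IsSignMatrix D) :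
    IsSignMatrix (fromBlocks A B C D)
  | .inl i, .inl j => hA i j
  | .inl i, .inr j => hB i j
  | .inr i, .inl j => hC i j
  | .inr i, .inr j => hD i j

variable [Fintype n] [DecidableEq n]

lemma det_le_factorial {M : Matrix n n ℤ} (hM : IsSignMatrix M) :
    M.det ≤ (Fintype.card n).factorial := by
  have hentry (i j) : AbsoluteValue.abs (M i j) ≤ 1 := by
    rcases hM i j with h | h <;> simp [h]
  simpa using (le_abs_self _).trans (det_le hentry)

lemma exists_fin_det_eq_of_sq_eq {M : Matrix n n ℤ} (hM : IsSignMatrix M) {N : ℕ}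
    (hcard : Fintype.card n = N) (hN : Odd N) {d : ℤ} (hd : M.det ^ 2 = d ^ 2) :
    ∃ M' : Matrix (Fin N) (Fin N) ℤ, IsSignMatrix M' ∧ M'.det = d := by
  let e : Fin N ≃ n := (Fintype.equivFinOfCardEq hcard).symm
  have hdet : (M.submatrix e e).det = M.det := det_submatrix_equiv_self e M
  have hsign : IsSignMatrix (M.submatrix e e) := fun i j => hM (e i) (e j)
  rcases sq_eq_sq_iff_eq_or_eq_neg.mp hd with h | h
  · exact ⟨_, hsign, hdet.trans h⟩
  · refine ⟨_, hsign.neg, ?_⟩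
    rw [det_neg, Fintype.card_fin, hN.neg_one_pow, hdet, h, neg_one_mul, neg_neg]

end IsSignMatrix

lemma IsSignMatrix.det_le_md {n : ℕ} {M : Matrix (Fin n) (Fin n) ℤ} (hM : IsSignMatrix M) :
    M.det ≤ md n := by
  refine le_csSup ⟨(n.factorial : ℤ), ?_⟩ ⟨M, hM, rfl⟩
  rintro d ⟨M', hM', rfl⟩
  simpa only [Fintype.card_fin] using IsSignMatrix.det_le_factorial hM'

section BlockCirculant

variable {R G α β γ : Type*}

/-- The `α × β` array of circulants whose block `(a, b)` is `circulant (x a b)`. The block index is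
the second component of a row or column index, as in `1 ⊗ₖ B`. -/
def blockCirculant [Sub G] (x : α → β → G → R) : Matrix (G × α) (G × β) R :=
  of fun p q => circulant (x p.2 q.2) p.1 q.1

lemma blockCirculant_apply [Sub G] (x : α → β → G → R) (s t : G) (a : α) (b : β) :
    blockCirculant x (s, a) (t, b) = x a b (s - t) := rfl

/-- The matrix in which every row of `B` is repeated once for each element of `G`. -/
def repeatRows (G : Type*) (B : Matrix β γ R) : Matrix (G × β) γ R :=
  of fun p j => B p.2 j

lemma repeatRows_apply (B : Matrix β γ R) (p : G × β) (j : γ) : repeatRows G B p j = B p.2 j := rfl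

variable [Fintype G] [Fintype β]

lemma transpose_repeatRows_mul_repeatRows [Semiring R] (B : Matrix β γ R) :
    (repeatRows G B)ᵀ * repeatRows G B = (Fintype.card G : R) • (Bᵀ * B) := by
  ext i j
  simp [mul_apply, Fintype.sum_prod_type, repeatRows_apply]

variable [AddGroup G]

lemma blockCirculant_mul_repeatRows [Semiring R] (x : α → β → G → R) (B : Matrix β γ R) :
    blockCirculant x * repeatRows G B = repeatRows G ((of fun a b => ∑ v, x a b v) * B) := by
  ext ⟨s, a⟩ j
  simp only [mul_apply, Fintype.sum_prod_type_right, blockCirculant_apply, repeatRows_apply,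
    of_apply, ← Finset.sum_mul]
  exact Finset.sum_congr rfl fun b _ => by
    rw [← (Equiv.subLeft s).sum_comp (x a b)]
    rfl

lemma blockCirculant_mul_transpose_apply [Semiring R] (x : α → β → G → R) (s t : G) (a b : α) :
    (blockCirculant x * (blockCirculant x)ᵀ) (s, a) (t, b) =
      ∑ v, ∑ k, x a k (s - t + v) * x b k v := by
  simp only [mul_apply, transpose_apply, Fintype.sum_prod_type, blockCirculant_apply]
  rw [← (Equiv.subLeft t).sum_comp fun v => ∑ k, x a k (s - t + v) * x b k v]
  simp only [Equiv.subLeft_apply, sub_add_sub_cancel]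

end BlockCirculant

/-- Three columns of a Hadamard matrix of order `4` whose remaining column is constant. -/
def border : Matrix (Fin 4) (Fin 3) ℤ :=
  !![1, 1, 1; 1, -1, -1; -1, 1, -1; -1, -1, 1]

lemma isSignMatrix_border : IsSignMatrix border := fun i j => by
  fin_cases i <;> fin_cases j <;> simp [border]

lemma ones_mul_border : (of fun _ _ => 1 : Matrix (Fin 4) (Fin 4) ℤ) * border = 0 := by
  decide

lemma border_transpose_mul_border : borderᵀ * border = (4 : ℤ) • 1 := by
  decide

lemma border_mul_transpose (a b : Fin 4) :
    (border * borderᵀ) a b = (if a = b then 4 else 0) - 1 := by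
  revert a b
  decide

section Bordered

variable {G : Type*} [AddGroup G]

/-- The array of circulants of `x`, bordered on the right by three columns constant on blocks, below
by their transpose, and completed by a corner of ones. -/
def bordered (x : Fin 4 → Fin 4 → G → ℤ) : Matrix (G × Fin 4 ⊕ Fin 3) (G × Fin 4 ⊕ Fin 3) ℤ :=
  fromBlocks (blockCirculant x) (repeatRows G border) (repeatRows G border)ᵀ (of fun _ _ => 1)

lemma isSignMatrix_bordered {x : Fin 4 → Fin 4 → G → ℤ}
    (hx : ∀ a b v, x a b v = 1 ∨ x a b v = -1) : IsSignMatrix (bordered x) :=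
  .fromBlocks (fun _ _ => hx _ _ _) (fun p j => isSignMatrix_border p.2 j)
    (fun j p => isSignMatrix_border p.2 j) fun _ _ => .inl rfl

variable [Fintype G] [DecidableEq G]

/-- Conditions on sixteen sequences on `G` under which the bordered array of their circulants has a
Gram determinant of closed form: every sequence sums to `1`, and the periodic correlations of two
rows of the array, summed over the columns, complement those of the rows of `border`. -/
structure IsBorderable (x : Fin 4 → Fin 4 → G → ℤ) : Prop where
  sum_eq_one : ∀ a b, ∑ v, x a b v = 1
  correlation_eq : ∀ a b t, ∑ v, ∑ k, x a k (t + v) * x b k v =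
    if a = b then (if t = 0 then 4 * (Fintype.card G : ℤ) else -4) else if t = 0 then 4 else 0

namespace IsBorderable

variable {x : Fin 4 → Fin 4 → G → ℤ}

lemma blockCirculant_mul_border (hx : IsBorderable x) :
    blockCirculant x * repeatRows G border = 0 := by
  simp only [blockCirculant_mul_repeatRows, hx.sum_eq_one, ones_mul_border]
  rfl

lemma gram_eq (hx : IsBorderable x) :
    blockCirculant x * (blockCirculant x)ᵀ + repeatRows G border * (repeatRows G border)ᵀ =
    1 ⊗ₖ ((4 * Fintype.card G : ℤ) • 1 + vecMulVec 1 ((4 : ℤ) • 1)) +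
      vecMulVec 1 ((-1 : ℤ) • 1) := by
  ext ⟨s, a⟩ ⟨t, b⟩
  have hborder : (repeatRows G border * (repeatRows G border)ᵀ) (s, a) (t, b) =
      (border * borderᵀ) a b := rfl
  rw [Matrix.add_apply, blockCirculant_mul_transpose_apply, hx.correlation_eq, hborder,
    border_mul_transpose]
  simp only [Matrix.add_apply, kroneckerMap_apply, Matrix.smul_apply, one_apply, vecMulVec_apply,
    Pi.smul_apply, Pi.one_apply, sub_eq_zero]
  by_cases hst : s = t <;> by_cases hab : a = b <;> simp [hst, hab]
  ring

lemma sq_det_bordered (hx : IsBorderable x) :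
    (bordered x).det ^ 2 = 16 * (4 * Fintype.card G) ^ (3 * Fintype.card G + 3) *
      (4 * Fintype.card G + 16) ^ (Fintype.card G - 1) := by
  have hborder : (repeatRows G border)ᵀ * repeatRows G border =
      (4 * Fintype.card G : ℤ) • (1 : Matrix (Fin 3) (Fin 3) ℤ) := by
    rw [transpose_repeatRows_mul_repeatRows, border_transpose_mul_border, smul_smul, mul_comm]
  have hcorner : IsLeftRegular (4 * Fintype.card G : ℤ) :=
    (IsRegular.of_ne_zero (by simp)).left
  have hgram : IsLeftRegular (4 * Fintype.card G + Fintype.card (Fin 4) * 4 : ℤ) :=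
    (IsRegular.of_ne_zero (by positivity)).left
  rw [bordered, sq_det_fromBlocks_transpose hx.blockCirculant_mul_border hborder hcorner,
    hx.gram_eq, det_one_kronecker_add_vecMulVec _ hgram]
  simp only [Fintype.card_fin]
  push_cast
  ring

end IsBorderable

end Bordered

/-- The indicator of `{u | u ^ e ∈ S}` with values `±1`; for a divisor `e` of `18` that set is,
up to `0`, a union of cyclotomic classes modulo `19`. -/
def powerSign (e : ℕ) (S : Finset (ZMod 19)) (u : ZMod 19) : ℤ :=
  if u ^ e ∈ S then 1 else -1

/-- The sixteen sequences of length `19`. Here `u ^ 9` is the Legendre symbol of `u`, and `u ^ 3` is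
a sixth root of unity, hence a power of `8`, for `u ≠ 0`. -/
def cyclotomicArray : Fin 4 → Fin 4 → ZMod 19 → ℤ :=
  let p := powerSign 9 {0, -1}
  let q := powerSign 9 {0, 1}
  let r₀ := powerSign 3 {0, 8 ^ 0, 8 ^ 1, 8 ^ 2}
  let r₁ := powerSign 3 {0, 8 ^ 4, 8 ^ 5, 8 ^ 6}
  let r₂ := powerSign 3 {0, 8 ^ 2, 8 ^ 3, 8 ^ 4}
  ![![p, q, q, q], ![q, r₀, r₁, r₂], ![q, r₁, r₂, r₀], ![q, r₂, r₀, r₁]]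

lemma cyclotomicArray_eq_one_or (a b : Fin 4) (u : ZMod 19) :
    cyclotomicArray a b u = 1 ∨ cyclotomicArray a b u = -1 := by
  revert a b u
  decide +kernel

lemma isBorderable_cyclotomicArray : IsBorderable cyclotomicArray where
  sum_eq_one := by decide +kernel
  correlation_eq := by decide +kernel

lemma exists_isSignMatrix_det_eq : ∃ M : Matrix (Fin 79) (Fin 79) ℤ,
    IsSignMatrix M ∧ M.det = 2 ^ 78 * 4 * 19 ^ 30 * 23 ^ 9 := by
  refine (isSignMatrix_bordered cyclotomicArray_eq_one_or).exists_fin_det_eq_of_sq_eq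
    (by simp) (by decide) ?_
  rw [isBorderable_cyclotomicArray.sq_det_bordered, ZMod.card]
  norm_num

end MaxDet

theorem stmt_16 :
    (∃ M : Matrix (Fin 79) (Fin 79) ℤ,
      (∀ i j, M i j = 1 ∨ M i j = -1) ∧ M.det = 2^78 * 4 * 19^30 * 23^9) ∧
    (2^78 * 4 * 19^30 * 23^9 : ℤ) ≤ md 79 := by
  obtain ⟨M, hM, hdet⟩ := MaxDet.exists_isSignMatrix_det_eq
  exact ⟨⟨M, hM, hdet⟩, hdet ▸ hM.det_le_md⟩
end
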